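/- Let n ≥ 2, 1/2 < s < 1, and let L, C, η₀ > 0. Let u : ℝⁿ → ℝ be Lipschitz with constant L and semiconcave with constant C, and suppose u satisfies the ellipticity bound η₀ at a point x ∈ ℝⁿ. Then the function t ↦ δ(u,x,t·e₁)/|t|^{1+2s} is Lebesgue integrable on ℝ (e₁ the first standard basis vector) and (1−s)·(1/2)·∫_ℝ δ(u,x,t·e₁)/|t|^{1+2s} dt ≥ μ₀. -/

import Mathlib

open MeasureTheory

noncomputable def surfOmega (k : ℕ) : ℝ := 2 * Real.pi ^ ((k : ℝ) / 2) / Real.Gamma ((k : ℝ) / 2)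

noncomputable def mu1 (s L C : ℝ) : ℝ := L ^ (2 - 2 * s) * (C / 2) ^ (2 * s - 1) / (2 * s - 1)

noncomputable def C1 (n : ℕ) (s L C : ℝ) : ℝ :=
  (Real.sqrt Real.pi * Real.Gamma (((n : ℝ) - 1) / 2 + s) / Real.Gamma ((n : ℝ) / 2 + s)) *
    (mu1 s L C * surfOmega (n - 1) / 2)

noncomputable def C2 (n : ℕ) (s : ℝ) : ℝ :=
  surfOmega (n - 1) * Real.Gamma (((n : ℝ) - 1) / 2) * Real.Gamma (s + 1 / 2) /
    (2 * Real.Gamma ((n : ℝ) / 2 + s))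

noncomputable def mu0 (n : ℕ) (s L C η₀ : ℝ) : ℝ :=
  C1 n s L C ^ (1 - (n : ℝ)) * (C2 n s)⁻¹ * (η₀ / 2) ^ (n : ℝ)

/-- Second-order increment `δ(u,x,y) = u(x+y) + u(x-y) - 2u(x)`. -/
noncomputable def delta2 {n : ℕ} (u : EuclideanSpace ℝ (Fin n) → ℝ)
    (x y : EuclideanSpace ℝ (Fin n)) : ℝ :=
  u (x + y) + u (x - y) - 2 * u x

/-- Integrand `δ(u,x,y)/|A⁻¹ y|^(n+2s)`. -/
noncomputable def kernelA {n : ℕ} (s : ℝ) (A : Matrix (Fin n) (Fin n) ℝ)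
    (u : EuclideanSpace ℝ (Fin n) → ℝ) (x y : EuclideanSpace ℝ (Fin n)) : ℝ :=
  delta2 u x y /
    ‖(EuclideanSpace.equiv (Fin n) ℝ).symm (A⁻¹.mulVec (EuclideanSpace.equiv (Fin n) ℝ y))‖ ^
      ((n : ℝ) + 2 * s)

/-- The linear operator `L_A u(x) = (1/2) ∫ δ(u,x,y)/|A⁻¹ y|^(n+2s) dy`. -/
noncomputable def LA {n : ℕ} (s : ℝ) (A : Matrix (Fin n) (Fin n) ℝ)
    (u : EuclideanSpace ℝ (Fin n) → ℝ) (x : EuclideanSpace ℝ (Fin n)) : ℝ :=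
  (1 / 2) * ∫ y, kernelA s A u x y

/-!
Take `A` equal to `a` on the line `ℝe` and to `b` on its orthogonal complement, and write
`y = t e + z`. The kernel is even in `z`, and averaging over `z ↦ -z` turns `δ(u,x,te+z)` into
`δ(u,x,te)` plus the mean of `δ(u,x+te,z)` and `δ(u,x-te,z)`, which is at most
`min (C|z|²) (2L|z|)`. Integrating out one of the two variables in each term gives
`(1-s) L_A u(x) ≤ a b^(n-1) (C₂ a^(2s) M + C₁ b^(2s))`, where `M` is the one-dimensional quantity
to be bounded from below. The choice `b^(2s) = η₀/(2C₁)`, `a b^(n-1) = 1` makes the transversal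
term `η₀/2`, and the ellipticity bound then becomes `M ≥ μ₀`.
-/

open Module Set

section FiberIntegration

variable {X Y : Type*} [MeasurableSpace X] [MeasurableSpace Y]
  {μ : Measure X} {ν : Measure Y} [SFinite ν] {f : X → ℝ} {K : X → Y → ℝ}

theorem integrable_fst_mul_iff
    (hm : AEStronglyMeasurable (fun p : X × Y => f p.1 * K p.1 p.2) (μ.prod ν))
    (hK_nonneg : ∀ x y, 0 ≤ K x y) (hK : ∀ᵐ x ∂μ, Integrable (K x) ν) :
    Integrable (fun p : X × Y => f p.1 * K p.1 p.2) (μ.prod ν) ↔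
      Integrable (fun x => f x * ∫ y, K x y ∂ν) μ := by
  have hnorm (x : X) : ∫ y, ‖f x * K x y‖ ∂ν = ‖f x * ∫ y, K x y ∂ν‖ := by
    simp only [norm_mul, Real.norm_of_nonneg (hK_nonneg x _), integral_const_mul,
      Real.norm_of_nonneg (integral_nonneg (hK_nonneg x))]
  constructor
  · intro h
    simpa only [integral_const_mul] using h.integral_prod_left
  · intro h
    rw [integrable_prod_iff hm]
    refine ⟨?_, by simpa only [hnorm] using h.norm⟩
    filter_upwards [hK] with x hx using hx.const_mul _

theorem integral_fst_mul [SFinite μ]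
    (h : Integrable (fun p : X × Y => f p.1 * K p.1 p.2) (μ.prod ν)) :
    ∫ p, f p.1 * K p.1 p.2 ∂(μ.prod ν) = ∫ x, f x * ∫ y, K x y ∂ν ∂μ := by
  simp only [integral_prod _ h, integral_const_mul]

end FiberIntegration

section Reflection

variable {X G : Type*} [MeasurableSpace X] [MeasurableSpace G] [InvolutiveNeg G] [MeasurableNeg G]
  {μ : Measure X} {ν : Measure G} [SFinite μ] [SFinite ν] [ν.IsNegInvariant]
  {h φ Φ ψ : X × G → ℝ}

theorem measurePreserving_prodMap_id_neg :
    MeasurePreserving (Prod.map id Neg.neg : X × G → X × G) (μ.prod ν) (μ.prod ν) :=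
  (MeasurePreserving.id μ).prod (Measure.measurePreserving_neg ν)

theorem measurableEmbedding_prodMap_id_neg :
    MeasurableEmbedding (Prod.map id Neg.neg : X × G → X × G) :=
  ((MeasurableEquiv.refl X).prodCongr (MeasurableEquiv.neg G)).measurableEmbedding

theorem integrable_comp_prodMap_id_neg (hh : Integrable h (μ.prod ν)) :
    Integrable (fun p => h (p.1, -p.2)) (μ.prod ν) :=
  (measurePreserving_prodMap_id_neg.integrable_comp_emb measurableEmbedding_prodMap_id_neg).2 hh

theorem integral_comp_prodMap_id_neg :
    ∫ p, h (p.1, -p.2) ∂(μ.prod ν) = ∫ p, h p ∂(μ.prod ν) :=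
  measurePreserving_prodMap_id_neg.integral_comp measurableEmbedding_prodMap_id_neg h

theorem integrable_of_add_reflection_le (hφm : AEStronglyMeasurable φ (μ.prod ν))
    (hh : Integrable h (μ.prod ν)) (hψ : Integrable ψ (μ.prod ν)) (hΦ : Integrable Φ (μ.prod ν))
    (hle : ∀ p, h p + h (p.1, -p.2) ≤ 2 * (φ p + ψ p)) (hφΦ : ∀ p, φ p ≤ Φ p) :
    Integrable φ (μ.prod ν) := by
  have hlower := ((hh.add (integrable_comp_prodMap_id_neg hh)).div_const 2).sub hψ
  refine integrable_of_le_of_le hφm (.of_forall fun p => ?_) (.of_forall hφΦ) hlower hΦ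
  simp only [Pi.sub_apply, Pi.add_apply]
  linarith [hle p]

theorem integral_le_of_add_reflection_le (hh : Integrable h (μ.prod ν))
    (hφ : Integrable φ (μ.prod ν)) (hψ : Integrable ψ (μ.prod ν))
    (hle : ∀ p, h p + h (p.1, -p.2) ≤ 2 * (φ p + ψ p)) :
    ∫ p, h p ∂(μ.prod ν) ≤ ∫ p, φ p ∂(μ.prod ν) + ∫ p, ψ p ∂(μ.prod ν) := by
  have hh' := integrable_comp_prodMap_id_neg hh
  have hmono := integral_mono (hh.add hh') ((hφ.add hψ).const_mul 2) hle
  simp only [Pi.add_apply] at hmono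
  rw [integral_add hh hh', integral_comp_prodMap_id_neg, integral_const_mul,
    integral_add hφ hψ] at hmono
  linarith

end Reflection

section QuadraticPower

variable {b c q : ℝ}

theorem rpow_mul_exp_mul_gaussian_integral (hb : 0 < b) (d : ℝ) {τ : ℝ} (hτ : 0 < τ) :
    τ ^ (q - 1) * Real.exp (-(c * τ)) * (Real.pi / (τ * b)) ^ d =
      (Real.pi / b) ^ d * (τ ^ (q - d - 1) * Real.exp (-(c * τ))) := by
  have hscale : (Real.pi / (τ * b)) ^ d = (Real.pi / b) ^ d * τ ^ (-d) := by
    rw [Real.rpow_neg hτ.le, ← Real.inv_rpow hτ.le,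
      ← Real.mul_rpow (by positivity) (by positivity)]
    congr 1
    field_simp
  rw [hscale, show q - d - 1 = (q - 1) + (-d) by ring, Real.rpow_add hτ]
  ring

theorem integral_rpow_mul_exp_mul_gaussian (hb : 0 ≤ b) (hc : 0 < c) (hq : 0 < q) (y : ℝ) :
    ∫ τ in Ioi (0 : ℝ), τ ^ (q - 1) * Real.exp (-(c * τ)) * Real.exp (-(τ * b) * y ^ 2) =
      Real.Gamma q * (c + b * y ^ 2) ^ (-q) := by
  have hpos : 0 < c + b * y ^ 2 := by positivity
  rw [Real.rpow_neg hpos.le, ← Real.inv_rpow hpos.le, mul_comm, ← one_div,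
    ← Real.integral_rpow_mul_exp_neg_mul_Ioi hq hpos]
  congr 1 with τ
  rw [mul_assoc, ← Real.exp_add]
  ring_nf

variable {V : Type*} [NormedAddCommGroup V] [InnerProductSpace ℝ V] [FiniteDimensional ℝ V]
  [MeasurableSpace V] [BorelSpace V]

theorem integrable_exp_neg_mul_sq_norm (hb : 0 < b) :
    Integrable (fun v : V => Real.exp (-b * ‖v‖ ^ 2)) := by
  refine Integrable.of_integral_ne_zero ?_
  rw [GaussianFourier.integral_rexp_neg_mul_sq_norm hb]
  positivity

theorem integrable_rpow_mul_exp_mul_gaussian (hb : 0 < b) (hc : 0 < c)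
    (hq : (finrank ℝ V : ℝ) / 2 < q) :
    Integrable (fun p : ℝ × V =>
        p.1 ^ (q - 1) * Real.exp (-(c * p.1)) * Real.exp (-(p.1 * b) * ‖p.2‖ ^ 2))
      ((volume.restrict (Ioi 0)).prod volume) := by
  have hGamma : IntegrableOn (fun τ : ℝ => τ ^ (q - finrank ℝ V / 2 - 1) * Real.exp (-(c * τ)))
      (Ioi 0) := by
    simpa using integrableOn_rpow_mul_exp_neg_mul_rpow (p := 1)
      (s := q - finrank ℝ V / 2 - 1) (by linarith) one_pos hc
  refine (integrable_fst_mul_iff (f := fun τ : ℝ => τ ^ (q - 1) * Real.exp (-(c * τ)))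
    (K := fun τ v => Real.exp (-(τ * b) * ‖v‖ ^ 2)) ?_ (fun _ _ => (Real.exp_pos _).le) ?_).2 ?_
  · exact Measurable.aestronglyMeasurable (by fun_prop)
  · filter_upwards [ae_restrict_mem measurableSet_Ioi] with τ hτ
    exact integrable_exp_neg_mul_sq_norm (mul_pos hτ hb)
  · refine (hGamma.const_mul ((Real.pi / b) ^ ((finrank ℝ V : ℝ) / 2))).congr ?_
    filter_upwards [ae_restrict_mem measurableSet_Ioi] with τ hτ
    rw [GaussianFourier.integral_rexp_neg_mul_sq_norm (mul_pos hτ hb),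
      rpow_mul_exp_mul_gaussian_integral hb _ hτ]

theorem integrable_rpow_neg_add_mul_sq_norm (hb : 0 < b) (hc : 0 < c)
    (hq : (finrank ℝ V : ℝ) / 2 < q) :
    Integrable (fun v : V => (c + b * ‖v‖ ^ 2) ^ (-q)) := by
  have hq_pos : 0 < q := lt_of_le_of_lt (by positivity) hq
  have h := (integrable_rpow_mul_exp_mul_gaussian hb hc hq).integral_prod_right
  simp only [integral_rpow_mul_exp_mul_gaussian hb.le hc hq_pos] at h
  exact (integrable_const_mul_iff (Real.Gamma_pos_of_pos hq_pos).ne'.isUnit _).1 h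

/- Write `Γ(q) r^(-q)` as `∫ τ^(q-1) exp(-rτ) dτ` and integrate the resulting Gaussian in `v`
first. -/
theorem integral_rpow_neg_add_mul_sq_norm (hb : 0 < b) (hc : 0 < c)
    (hq : (finrank ℝ V : ℝ) / 2 < q) :
    ∫ v : V, (c + b * ‖v‖ ^ 2) ^ (-q) = (Real.pi / b) ^ ((finrank ℝ V : ℝ) / 2) *
      (Real.Gamma (q - (finrank ℝ V : ℝ) / 2) / Real.Gamma q) *
      c ^ ((finrank ℝ V : ℝ) / 2 - q) := by
  set d : ℝ := (finrank ℝ V : ℝ) / 2 with hd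
  have hq_pos : 0 < q := lt_of_le_of_lt (by positivity) hq
  have hΓ : Real.Gamma q ≠ 0 := (Real.Gamma_pos_of_pos hq_pos).ne'
  have hint := integrable_rpow_mul_exp_mul_gaussian hb hc hq
  suffices hswap : Real.Gamma q * ∫ v : V, (c + b * ‖v‖ ^ 2) ^ (-q) =
      (Real.pi / b) ^ d * (c ^ (d - q) * Real.Gamma (q - d)) by
    rw [← mul_right_inj' hΓ, hswap]
    field_simp
  calc Real.Gamma q * ∫ v : V, (c + b * ‖v‖ ^ 2) ^ (-q)
      = ∫ v : V, ∫ τ in Ioi (0 : ℝ),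
          τ ^ (q - 1) * Real.exp (-(c * τ)) * Real.exp (-(τ * b) * ‖v‖ ^ 2) := by
        simp only [integral_rpow_mul_exp_mul_gaussian hb.le hc hq_pos, integral_const_mul]
    _ = ∫ τ in Ioi (0 : ℝ), τ ^ (q - 1) * Real.exp (-(c * τ)) *
          ∫ v : V, Real.exp (-(τ * b) * ‖v‖ ^ 2) := by
        rw [← integral_prod_symm _ hint]
        exact integral_fst_mul (f := fun τ : ℝ => τ ^ (q - 1) * Real.exp (-(c * τ)))
          (K := fun τ v => Real.exp (-(τ * b) * ‖v‖ ^ 2)) hint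
    _ = ∫ τ in Ioi (0 : ℝ), (Real.pi / b) ^ d * (τ ^ (q - d - 1) * Real.exp (-(c * τ))) := by
        refine setIntegral_congr_fun measurableSet_Ioi fun τ hτ => ?_
        simp only [GaussianFourier.integral_rexp_neg_mul_sq_norm (mul_pos hτ hb), ← hd,
          rpow_mul_exp_mul_gaussian_integral hb _ hτ]
    _ = (Real.pi / b) ^ d * (c ^ (d - q) * Real.Gamma (q - d)) := by
        rw [integral_const_mul, Real.integral_rpow_mul_exp_neg_mul_Ioi (sub_pos.2 hq) hc, one_div,
          Real.inv_rpow hc.le, ← Real.rpow_neg hc.le, neg_sub]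

end QuadraticPower

section GrowthBound

/-- The upper bound `min (C r²) (2 L r)` for the second-order increments of length `r` of a function
that is semiconcave with constant `C` and Lipschitz with constant `L`. -/
noncomputable def growthBound (L C r : ℝ) : ℝ := min (C * r ^ 2) (2 * L * r)

variable {s L C r : ℝ}

theorem measurable_growthBound : Measurable (growthBound L C) := by
  unfold growthBound
  fun_prop

theorem growthBound_mul_rpow_of_le (hC : 0 < C) (hr : 0 < r) (hrR : r ≤ 2 * L / C) :
    growthBound L C r * r ^ (-(1 + 2 * s)) = C * r ^ (1 - 2 * s) := by
  have hle : C * r ^ 2 ≤ 2 * L * r := by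
    rw [le_div_iff₀ hC] at hrR
    nlinarith
  rw [growthBound, min_eq_left hle, show 1 - 2 * s = 2 + -(1 + 2 * s) by ring, Real.rpow_add hr,
    Real.rpow_two, mul_assoc]

theorem growthBound_mul_rpow_of_ge (hC : 0 < C) (hr : 0 < r) (hRr : 2 * L / C ≤ r) :
    growthBound L C r * r ^ (-(1 + 2 * s)) = 2 * L * r ^ (-(2 * s)) := by
  have hle : 2 * L * r ≤ C * r ^ 2 := by
    rw [div_le_iff₀ hC] at hRr
    nlinarith
  rw [growthBound, min_eq_right hle, show -(2 * s) = 1 + -(1 + 2 * s) by ring, Real.rpow_add hr,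
    Real.rpow_one, mul_assoc]

theorem integrableOn_Ioc_growthBound_mul_rpow (hs1 : s < 1) (hL : 0 < L) (hC : 0 < C) :
    IntegrableOn (fun r => growthBound L C r * r ^ (-(1 + 2 * s))) (Ioc 0 (2 * L / C)) := by
  have hpow : IntervalIntegrable (fun r : ℝ => r ^ (1 - 2 * s)) volume 0 (2 * L / C) :=
    intervalIntegral.intervalIntegrable_rpow' (by linarith)
  rw [intervalIntegrable_iff_integrableOn_Ioc_of_le (by positivity)] at hpow
  exact IntegrableOn.congr_fun (hpow.const_mul C)
    (fun r hr => (growthBound_mul_rpow_of_le hC hr.1 hr.2).symm) measurableSet_Ioc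

theorem integrableOn_Ioi_div_growthBound_mul_rpow (hs : 1 / 2 < s) (hL : 0 < L) (hC : 0 < C) :
    IntegrableOn (fun r => growthBound L C r * r ^ (-(1 + 2 * s))) (Ioi (2 * L / C)) := by
  have hR : 0 < 2 * L / C := by positivity
  have hpow := integrableOn_Ioi_rpow_of_lt (a := -(2 * s)) (by linarith) hR
  exact IntegrableOn.congr_fun (hpow.const_mul (2 * L))
    (fun r hr => (growthBound_mul_rpow_of_ge hC (hR.trans hr) (le_of_lt hr)).symm)
    measurableSet_Ioi

theorem integrableOn_growthBound_mul_rpow (hs : 1 / 2 < s) (hs1 : s < 1) (hL : 0 < L)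
    (hC : 0 < C) : IntegrableOn (fun r => growthBound L C r * r ^ (-(1 + 2 * s))) (Ioi 0) := by
  rw [← Ioc_union_Ioi_eq_Ioi (show 0 ≤ 2 * L / C by positivity)]
  exact (integrableOn_Ioc_growthBound_mul_rpow hs1 hL hC).union
    (integrableOn_Ioi_div_growthBound_mul_rpow hs hL hC)

theorem mu1_div_one_sub (hs : 1 / 2 < s) (hs1 : s < 1) (hL : 0 < L) (hC : 0 < C) :
    mu1 s L C / (1 - s) = C * ((2 * L / C) ^ (2 - 2 * s) / (2 - 2 * s)) +
      2 * L * ((2 * L / C) ^ (1 - 2 * s) / (2 * s - 1)) := by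
  have hR : 0 < 2 * L / C := by positivity
  have hone_sub : 1 - s ≠ 0 := by linarith
  have htwo_sub : 2 * s - 1 ≠ 0 := by linarith
  have hRpow : (2 * L / C) ^ (1 - 2 * s) = L ^ (1 - 2 * s) * (C / 2) ^ (2 * s - 1) := by
    rw [show 2 * L / C = L * (C / 2)⁻¹ by field_simp, Real.mul_rpow hL.le (by positivity),
      Real.inv_rpow (by positivity), ← Real.rpow_neg (by positivity), neg_sub]
  have hsplit {y : ℝ} (hy : 0 < y) : y ^ (2 - 2 * s) = y * y ^ (1 - 2 * s) := by
    rw [show 2 - 2 * s = 1 + (1 - 2 * s) by ring, Real.rpow_add hy, Real.rpow_one]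
  rw [mu1, hsplit hR, hsplit hL, hRpow, show 2 - 2 * s = 2 * (1 - s) by ring]
  field_simp
  ring

theorem integral_growthBound_mul_rpow (hs : 1 / 2 < s) (hs1 : s < 1) (hL : 0 < L) (hC : 0 < C) :
    ∫ r in Ioi 0, growthBound L C r * r ^ (-(1 + 2 * s)) = mu1 s L C / (1 - s) := by
  have hR : 0 < 2 * L / C := by positivity
  have hnear : ∫ r in Ioc 0 (2 * L / C), growthBound L C r * r ^ (-(1 + 2 * s)) =
      C * ((2 * L / C) ^ (2 - 2 * s) / (2 - 2 * s)) := by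
    rw [setIntegral_congr_fun measurableSet_Ioc fun r hr =>
        growthBound_mul_rpow_of_le hC hr.1 hr.2,
      integral_const_mul, ← intervalIntegral.integral_of_le hR.le,
      integral_rpow (Or.inl (by linarith)), Real.zero_rpow (by linarith)]
    ring_nf
  have hfar : ∫ r in Ioi (2 * L / C), growthBound L C r * r ^ (-(1 + 2 * s)) =
      2 * L * ((2 * L / C) ^ (1 - 2 * s) / (2 * s - 1)) := by
    rw [setIntegral_congr_fun measurableSet_Ioi fun r hr =>
        growthBound_mul_rpow_of_ge hC (hR.trans hr) (le_of_lt hr),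
      integral_const_mul, integral_Ioi_rpow_of_lt (by linarith) hR, neg_div, ← div_neg]
    ring_nf
  rw [← Ioc_union_Ioi_eq_Ioi hR.le, setIntegral_union Ioc_disjoint_Ioi_same measurableSet_Ioi
    (integrableOn_Ioc_growthBound_mul_rpow hs1 hL hC)
    (integrableOn_Ioi_div_growthBound_mul_rpow hs hL hC), hnear, hfar,
    mu1_div_one_sub hs hs1 hL hC]

theorem pow_sub_one_smul_growthBound_mul_rpow {d : ℕ} (hd : 0 < d) (hr : 0 < r) :
    r ^ (d - 1) • (growthBound L C r * r ^ (-(d + 2 * s))) =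
      growthBound L C r * r ^ (-(1 + 2 * s)) := by
  have hexp : -(1 + 2 * s) = ((d - 1 : ℕ) : ℝ) + -(d + 2 * s) := by
    rw [Nat.cast_sub hd, Nat.cast_one]
    ring
  rw [hexp, Real.rpow_add hr, Real.rpow_natCast, smul_eq_mul]
  ring

variable {V : Type*} [NormedAddCommGroup V] [InnerProductSpace ℝ V] [FiniteDimensional ℝ V]
  [Nontrivial V] [MeasurableSpace V] [BorelSpace V]

theorem finrank_mul_volume_unitBall :
    finrank ℝ V * (volume : Measure V).real (Metric.ball 0 1) = surfOmega (finrank ℝ V) := by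
  have hd : (0 : ℝ) < finrank ℝ V := by exact_mod_cast finrank_pos
  have hΓ : Real.Gamma ((finrank ℝ V : ℝ) / 2) ≠ 0 := (Real.Gamma_pos_of_pos (by positivity)).ne'
  rw [Measure.real, InnerProductSpace.volume_ball, ENNReal.ofReal_one, one_pow, one_mul,
    ENNReal.toReal_ofReal (by positivity), surfOmega, Real.Gamma_add_one (by positivity),
    Real.sqrt_eq_rpow, ← Real.rpow_natCast, ← Real.rpow_mul Real.pi_pos.le,
    one_div_mul_eq_div]
  field_simp

theorem integrable_growthBound_norm (hs : 1 / 2 < s) (hs1 : s < 1) (hL : 0 < L) (hC : 0 < C) :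
    Integrable (fun z : V => growthBound L C ‖z‖ * ‖z‖ ^ (-(finrank ℝ V + 2 * s))) :=
  (integrable_fun_norm_addHaar volume
    (f := fun r => growthBound L C r * r ^ (-(finrank ℝ V + 2 * s)))).2 <|
    (integrableOn_growthBound_mul_rpow hs hs1 hL hC).congr_fun
      (fun _ hr => (pow_sub_one_smul_growthBound_mul_rpow finrank_pos hr).symm) measurableSet_Ioi

theorem integral_growthBound_norm (hs : 1 / 2 < s) (hs1 : s < 1) (hL : 0 < L) (hC : 0 < C) :
    ∫ z : V, growthBound L C ‖z‖ * ‖z‖ ^ (-(finrank ℝ V + 2 * s)) =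
      surfOmega (finrank ℝ V) * (mu1 s L C / (1 - s)) := by
  rw [integral_fun_norm_addHaar volume
      (fun r => growthBound L C r * r ^ (-(finrank ℝ V + 2 * s))),
    setIntegral_congr_fun measurableSet_Ioi fun r hr =>
      pow_sub_one_smul_growthBound_mul_rpow finrank_pos hr,
    integral_growthBound_mul_rpow hs hs1 hL hC, ← finrank_mul_volume_unitBall (V := V),
    nsmul_eq_mul, smul_eq_mul, mul_assoc]

end GrowthBound

section Constants

variable {d : ℕ} {s L C : ℝ}

theorem C1_succ : C1 (d + 1) s L C =
    √Real.pi * Real.Gamma (d / 2 + s) / Real.Gamma ((d + 1) / 2 + s) *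
      (mu1 s L C * surfOmega d / 2) := by
  simp only [C1, Nat.cast_add, Nat.cast_one, add_sub_cancel_right, Nat.add_sub_cancel]

theorem C2_succ (hd : 0 < d) : C2 (d + 1) s =
    Real.pi ^ ((d : ℝ) / 2) * (Real.Gamma (1 / 2 + s) / Real.Gamma ((d + 1) / 2 + s)) := by
  have hΓ : Real.Gamma ((d : ℝ) / 2) ≠ 0 := (Real.Gamma_pos_of_pos (by positivity)).ne'
  simp only [C2, surfOmega, Nat.cast_add, Nat.cast_one, add_sub_cancel_right, Nat.add_sub_cancel,
    add_comm s]
  field_simp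

theorem C1_succ_pos (hd : 0 < d) (hs : 1 / 2 < s) (hL : 0 < L) (hC : 0 < C) :
    0 < C1 (d + 1) s L C := by
  have hmu1 : 0 < mu1 s L C := div_pos (by positivity) (by linarith)
  have hω : 0 < surfOmega d :=
    div_pos (by positivity) (Real.Gamma_pos_of_pos (by positivity))
  rw [C1_succ]
  positivity

theorem C2_succ_pos (hd : 0 < d) (hs : 0 < s) : 0 < C2 (d + 1) s := by
  rw [C2_succ hd]
  positivity

end Constants

section AxialKernel

variable {V : Type*} [NormedAddCommGroup V] [InnerProductSpace ℝ V] {s L C a b : ℝ}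

/-- The kernel `|B y|^(-(n + 2s))` on `ℝ × V`, of dimension `n = dim V + 1`, where `B` multiplies
the first factor by `a` and the second by `b`. -/
noncomputable def axialKernel (s a b : ℝ) (t : ℝ) (z : V) : ℝ :=
  (a ^ 2 * t ^ 2 + b ^ 2 * ‖z‖ ^ 2) ^ (-((finrank ℝ V + 1 : ℝ) / 2 + s))

theorem axialKernel_nonneg (t : ℝ) (z : V) : 0 ≤ axialKernel s a b t z :=
  Real.rpow_nonneg (by positivity) _

theorem axialKernel_neg (t : ℝ) (z : V) : axialKernel s a b t (-z) = axialKernel s a b t z := by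
  rw [axialKernel, norm_neg, axialKernel]

theorem sq_mul_sq_rpow_neg {r : ℝ} (ha : 0 ≤ a) (hr : 0 ≤ r) (p : ℝ) :
    (a ^ 2 * r ^ 2) ^ (-p) = a ^ (-(2 * p)) * r ^ (-(2 * p)) := by
  rw [← mul_pow, ← Real.rpow_natCast, ← Real.rpow_mul (by positivity), Real.mul_rpow ha hr,
    Nat.cast_ofNat, mul_neg]

theorem pi_div_sq_rpow_half (hb : 0 ≤ b) (d : ℕ) :
    (Real.pi / b ^ 2) ^ ((d : ℝ) / 2) = Real.pi ^ ((d : ℝ) / 2) * (b ^ d)⁻¹ := by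
  rw [Real.div_rpow Real.pi_pos.le (by positivity), ← Real.rpow_natCast b 2,
    ← Real.rpow_mul hb, Nat.cast_ofNat, mul_div_cancel₀ _ two_ne_zero, Real.rpow_natCast,
    div_eq_mul_inv]

theorem integrable_axialKernel_left (hs : 0 < s) (ha : 0 < a) (hb : 0 < b) {z : V} (hz : z ≠ 0) :
    Integrable fun t => axialKernel s a b t z := by
  have := norm_pos_iff.2 hz
  simpa only [axialKernel, Real.norm_eq_abs, sq_abs, add_comm (a ^ 2 * _ ^ 2)] using
    integrable_rpow_neg_add_mul_sq_norm (V := ℝ) (b := a ^ 2) (c := b ^ 2 * ‖z‖ ^ 2)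
      (q := (finrank ℝ V + 1 : ℝ) / 2 + s) (by positivity) (by positivity)
      (by rw [finrank_self, Nat.cast_one]; linarith [(finrank ℝ V).cast_nonneg (α := ℝ)])

theorem integral_axialKernel_left (hs : 0 < s) (ha : 0 < a) (hb : 0 < b) {z : V} (hz : z ≠ 0) :
    ∫ t, axialKernel s a b t z =
      √Real.pi * Real.Gamma (finrank ℝ V / 2 + s) / Real.Gamma ((finrank ℝ V + 1) / 2 + s) *
        (a * b ^ finrank ℝ V)⁻¹ * b ^ (-(2 * s)) * ‖z‖ ^ (-(finrank ℝ V + 2 * s)) := by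
  have hz' : 0 < ‖z‖ := norm_pos_iff.2 hz
  have hsplit : b ^ (-(finrank ℝ V + 2 * s)) = (b ^ finrank ℝ V)⁻¹ * b ^ (-(2 * s)) := by
    rw [neg_add, Real.rpow_add hb, Real.rpow_neg hb.le, Real.rpow_natCast]
  have hbracket := integral_rpow_neg_add_mul_sq_norm (V := ℝ) (b := a ^ 2)
    (c := b ^ 2 * ‖z‖ ^ 2) (q := (finrank ℝ V + 1 : ℝ) / 2 + s) (by positivity) (by positivity)
    (by rw [finrank_self, Nat.cast_one]; linarith [(finrank ℝ V).cast_nonneg (α := ℝ)])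
  rw [finrank_self, pi_div_sq_rpow_half ha.le, pow_one, Nat.cast_one, ← Real.sqrt_eq_rpow,
    show 1 / 2 - ((finrank ℝ V + 1 : ℝ) / 2 + s) = -(finrank ℝ V / 2 + s) by ring,
    show (finrank ℝ V + 1 : ℝ) / 2 + s - 1 / 2 = finrank ℝ V / 2 + s by ring,
    sq_mul_sq_rpow_neg hb.le hz'.le,
    show 2 * ((finrank ℝ V : ℝ) / 2 + s) = finrank ℝ V + 2 * s by ring, hsplit] at hbracket
  simp only [axialKernel, add_comm (a ^ 2 * _ ^ 2), mul_inv]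
  simp only [Real.norm_eq_abs, sq_abs] at hbracket
  rw [hbracket]
  ring

variable [MeasurableSpace V] [BorelSpace V]

theorem measurable_axialKernel :
    Measurable fun p : ℝ × V => axialKernel s a b p.1 p.2 := by
  unfold axialKernel
  fun_prop

variable [FiniteDimensional ℝ V]

theorem integrable_axialKernel_right (hs : 0 < s) (ha : 0 < a) (hb : 0 < b) {t : ℝ} (ht : t ≠ 0) :
    Integrable (axialKernel (V := V) s a b t) :=
  integrable_rpow_neg_add_mul_sq_norm (by positivity) (by positivity) (by linarith)

theorem integral_axialKernel_right [Nontrivial V] (hs : 0 < s) (ha : 0 < a) (hb : 0 < b) {t : ℝ}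
    (ht : t ≠ 0) :
    ∫ z : V, axialKernel s a b t z =
      C2 (finrank ℝ V + 1) s * (a * b ^ finrank ℝ V)⁻¹ * a ^ (-(2 * s)) *
        |t| ^ (-(1 + 2 * s)) := by
  unfold axialKernel
  have hsplit : a ^ (-(1 + 2 * s)) = a⁻¹ * a ^ (-(2 * s)) := by
    rw [neg_add, Real.rpow_add ha, Real.rpow_neg_one]
  rw [integral_rpow_neg_add_mul_sq_norm (by positivity) (by positivity) (by linarith),
    C2_succ finrank_pos, pi_div_sq_rpow_half hb.le, ← sq_abs t,
    show (finrank ℝ V : ℝ) / 2 - ((finrank ℝ V + 1) / 2 + s) = -(1 / 2 + s) by ring,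
    sq_mul_sq_rpow_neg ha.le (abs_nonneg t), show 2 * (1 / 2 + s) = 1 + 2 * s by ring, hsplit,
    show (finrank ℝ V + 1 : ℝ) / 2 + s - finrank ℝ V / 2 = 1 / 2 + s by ring, mul_inv]
  ring

variable [Nontrivial V]

theorem integrable_fst_mul_axialKernel_iff (hs : 0 < s) (ha : 0 < a) (hb : 0 < b) {f : ℝ → ℝ}
    (hf : Measurable f) :
    Integrable (fun p : ℝ × V => f p.1 * axialKernel s a b p.1 p.2) (volume.prod volume) ↔
      Integrable fun t => f t * |t| ^ (-(1 + 2 * s)) := by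
  have hconst : C2 (finrank ℝ V + 1) s * (a * b ^ finrank ℝ V)⁻¹ * a ^ (-(2 * s)) ≠ 0 := by
    have := C2_succ_pos (finrank_pos (R := ℝ) (M := V)) hs
    positivity
  rw [integrable_fst_mul_iff
      ((hf.comp measurable_fst).mul measurable_axialKernel).aestronglyMeasurable
      axialKernel_nonneg
      ((Measure.ae_ne volume 0).mono fun t ht => integrable_axialKernel_right hs ha hb ht),
    ← integrable_const_mul_iff hconst.isUnit (fun t => f t * |t| ^ (-(1 + 2 * s)))]
  refine integrable_congr ((Measure.ae_ne volume 0).mono fun t ht => ?_)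
  simp only [integral_axialKernel_right hs ha hb ht]
  ring

theorem integral_fst_mul_axialKernel (hs : 0 < s) (ha : 0 < a) (hb : 0 < b) {f : ℝ → ℝ}
    (h : Integrable (fun p : ℝ × V => f p.1 * axialKernel s a b p.1 p.2) (volume.prod volume)) :
    ∫ p : ℝ × V, f p.1 * axialKernel s a b p.1 p.2 ∂(volume.prod volume) =
      C2 (finrank ℝ V + 1) s * (a * b ^ finrank ℝ V)⁻¹ * a ^ (-(2 * s)) *
        ∫ t, f t * |t| ^ (-(1 + 2 * s)) := by
  rw [integral_fst_mul h, ← integral_const_mul]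
  refine integral_congr_ae ((Measure.ae_ne volume 0).mono fun t ht => ?_)
  simp only [integral_axialKernel_right hs ha hb ht]
  ring

theorem integrable_snd_mul_axialKernel (hs : 0 < s) (ha : 0 < a) (hb : 0 < b) {g : V → ℝ}
    (hg : Measurable g) (hint : Integrable fun z => g z * ‖z‖ ^ (-(finrank ℝ V + 2 * s))) :
    Integrable (fun p : ℝ × V => g p.2 * axialKernel s a b p.1 p.2) (volume.prod volume) := by
  have hswap : Integrable (fun p : V × ℝ => g p.1 * axialKernel s a b p.2 p.1)
      (volume.prod volume) := by
    refine (integrable_fst_mul_iff (K := fun z t => axialKernel s a b t z)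
      ((hg.comp measurable_fst).mul
        (measurable_axialKernel.comp measurable_swap)).aestronglyMeasurable
      (fun z t => axialKernel_nonneg t z)
      ((Measure.ae_ne volume 0).mono fun z hz => integrable_axialKernel_left hs ha hb hz)).2 ?_
    refine (hint.const_mul (√Real.pi * Real.Gamma (finrank ℝ V / 2 + s) /
      Real.Gamma ((finrank ℝ V + 1) / 2 + s) * (a * b ^ finrank ℝ V)⁻¹ * b ^ (-(2 * s)))).congr
      ((Measure.ae_ne volume 0).mono fun z hz => ?_)
    simp only [integral_axialKernel_left hs ha hb hz]
    ring
  exact hswap.swap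

theorem integral_snd_mul_axialKernel (hs : 0 < s) (ha : 0 < a) (hb : 0 < b) {g : V → ℝ}
    (h : Integrable (fun p : ℝ × V => g p.2 * axialKernel s a b p.1 p.2) (volume.prod volume)) :
    ∫ p : ℝ × V, g p.2 * axialKernel s a b p.1 p.2 ∂(volume.prod volume) =
      √Real.pi * Real.Gamma (finrank ℝ V / 2 + s) / Real.Gamma ((finrank ℝ V + 1) / 2 + s) *
        (a * b ^ finrank ℝ V)⁻¹ * b ^ (-(2 * s)) *
        ∫ z, g z * ‖z‖ ^ (-(finrank ℝ V + 2 * s)) := by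
  rw [integral_prod_symm _ h, ← integral_const_mul]
  refine integral_congr_ae ((Measure.ae_ne volume 0).mono fun z hz => ?_)
  simp only [integral_const_mul, integral_axialKernel_left hs ha hb hz]
  ring

theorem integrable_growthBound_fst_mul_axialKernel (hs : 1 / 2 < s) (hs1 : s < 1) (hL : 0 < L)
    (hC : 0 < C) (ha : 0 < a) (hb : 0 < b) :
    Integrable (fun p : ℝ × V => growthBound L C |p.1| * axialKernel s a b p.1 p.2)
      (volume.prod volume) := by
  have haxis := integrable_growthBound_norm (V := ℝ) hs hs1 hL hC
  simp only [finrank_self, Nat.cast_one, Real.norm_eq_abs] at haxis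
  exact (integrable_fst_mul_axialKernel_iff (by linarith) ha hb
    (measurable_growthBound.comp measurable_abs)).2 haxis

theorem integrable_growthBound_snd_mul_axialKernel (hs : 1 / 2 < s) (hs1 : s < 1) (hL : 0 < L)
    (hC : 0 < C) (ha : 0 < a) (hb : 0 < b) :
    Integrable (fun p : ℝ × V => growthBound L C ‖p.2‖ * axialKernel s a b p.1 p.2)
      (volume.prod volume) :=
  integrable_snd_mul_axialKernel (by linarith) ha hb (measurable_growthBound.comp measurable_norm)
    (integrable_growthBound_norm hs hs1 hL hC)

theorem integral_growthBound_snd_mul_axialKernel (hs : 1 / 2 < s) (hs1 : s < 1) (hL : 0 < L)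
    (hC : 0 < C) (ha : 0 < a) (hb : 0 < b) :
    ∫ p : ℝ × V, growthBound L C ‖p.2‖ * axialKernel s a b p.1 p.2 ∂(volume.prod volume) =
      2 * C1 (finrank ℝ V + 1) s L C / (1 - s) * (a * b ^ finrank ℝ V)⁻¹ * b ^ (-(2 * s)) := by
  rw [integral_snd_mul_axialKernel (g := fun z => growthBound L C ‖z‖) (by linarith) ha hb
      (integrable_growthBound_snd_mul_axialKernel hs hs1 hL hC ha hb),
    integral_growthBound_norm hs hs1 hL hC, C1_succ]
  ring

end AxialKernel

section AxialEstimate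

variable {V : Type*} [NormedAddCommGroup V] [InnerProductSpace ℝ V]
  {s L C a b : ℝ} {f : ℝ → ℝ} {D : ℝ × V → ℝ}

theorem axialKernel_add_reflection_le
    (hD : ∀ t z, D (t, z) + D (t, -z) ≤ 2 * (f t + growthBound L C ‖z‖)) (p : ℝ × V) :
    D p * axialKernel s a b p.1 p.2 + D (p.1, -p.2) * axialKernel s a b p.1 (-p.2) ≤
      2 * (f p.1 * axialKernel s a b p.1 p.2 +
        growthBound L C ‖p.2‖ * axialKernel s a b p.1 p.2) := by
  rw [axialKernel_neg, ← add_mul, ← add_mul, ← mul_assoc]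
  exact mul_le_mul_of_nonneg_right (hD p.1 p.2) (axialKernel_nonneg _ _)

variable [FiniteDimensional ℝ V] [Nontrivial V] [MeasurableSpace V] [BorelSpace V]

theorem integrable_of_integrable_mul_axialKernel (hs : 1 / 2 < s) (hs1 : s < 1) (hL : 0 < L)
    (hC : 0 < C) (ha : 0 < a) (hb : 0 < b) (hf : Measurable f)
    (hf_le : ∀ t, f t ≤ growthBound L C |t|)
    (hD : ∀ t z, D (t, z) + D (t, -z) ≤ 2 * (f t + growthBound L C ‖z‖))
    (hDint : Integrable (fun p => D p * axialKernel s a b p.1 p.2) (volume.prod volume)) :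
    Integrable fun t => f t * |t| ^ (-(1 + 2 * s)) :=
  (integrable_fst_mul_axialKernel_iff (V := V) (by linarith) ha hb hf).1 <|
    integrable_of_add_reflection_le
      ((hf.comp measurable_fst).mul measurable_axialKernel).aestronglyMeasurable hDint
      (integrable_growthBound_snd_mul_axialKernel hs hs1 hL hC ha hb)
      (integrable_growthBound_fst_mul_axialKernel hs hs1 hL hC ha hb)
      (axialKernel_add_reflection_le hD)
      fun p => mul_le_mul_of_nonneg_right (hf_le p.1) (axialKernel_nonneg _ _)

theorem integral_mul_axialKernel_le (hs : 1 / 2 < s) (hs1 : s < 1) (hL : 0 < L)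
    (hC : 0 < C) (ha : 0 < a) (hb : 0 < b) (hf : Measurable f)
    (hfint : Integrable fun t => f t * |t| ^ (-(1 + 2 * s)))
    (hD : ∀ t z, D (t, z) + D (t, -z) ≤ 2 * (f t + growthBound L C ‖z‖))
    (hDint : Integrable (fun p => D p * axialKernel s a b p.1 p.2) (volume.prod volume)) :
    (1 - s) * (1 / 2 * ∫ p, D p * axialKernel s a b p.1 p.2 ∂(volume.prod volume)) ≤
      (a * b ^ finrank ℝ V)⁻¹ *
        (C2 (finrank ℝ V + 1) s * a ^ (-(2 * s)) *
            ((1 - s) * (1 / 2 * ∫ t, f t * |t| ^ (-(1 + 2 * s)))) +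
          C1 (finrank ℝ V + 1) s L C * b ^ (-(2 * s))) := by
  have hs_pos : 0 < s := by linarith
  have hone_sub : 0 < 1 - s := by linarith
  have hfK := (integrable_fst_mul_axialKernel_iff (V := V) hs_pos ha hb hf).2 hfint
  have hle := integral_le_of_add_reflection_le hDint hfK
    (integrable_growthBound_snd_mul_axialKernel hs hs1 hL hC ha hb)
    (axialKernel_add_reflection_le hD)
  rw [integral_fst_mul_axialKernel hs_pos ha hb hfK,
    integral_growthBound_snd_mul_axialKernel hs hs1 hL hC ha hb] at hle
  refine (mul_le_mul_of_nonneg_left (mul_le_mul_of_nonneg_left hle one_half_pos.le)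
    hone_sub.le).trans_eq ?_
  field_simp

end AxialEstimate

section AxialMatrix

open Matrix

variable {ι : Type*} [DecidableEq ι] {e w : ι → ℝ} {a b a' b' t : ℝ}

/-- The symmetric matrix that, for a unit vector `e`, multiplies `e` by `a` and the orthogonal
complement of `e` by `b`. -/
def axialMatrix (e : ι → ℝ) (a b : ℝ) : Matrix ι ι ℝ := b • 1 + (a - b) • vecMulVec e e

theorem axialMatrix_one_one : axialMatrix e 1 1 = 1 := by
  rw [axialMatrix, sub_self, zero_smul, add_zero, one_smul]

theorem isHermitian_axialMatrix : (axialMatrix e a b).IsHermitian := by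
  ext i j
  simp [axialMatrix, vecMulVec_apply, Matrix.one_apply, eq_comm, mul_comm]

variable [Fintype ι]

theorem axialMatrix_mul_axialMatrix (he : e ⬝ᵥ e = 1) :
    axialMatrix e a b * axialMatrix e a' b' = axialMatrix e (a * a') (b * b') := by
  simp only [axialMatrix, add_mul, mul_add, smul_mul_assoc, mul_smul_comm, one_mul, mul_one,
    vecMulVec_mul_vecMulVec, he, one_smul]
  module

theorem axialMatrix_mul_axialMatrix_inv (he : e ⬝ᵥ e = 1) (ha : a ≠ 0) (hb : b ≠ 0) :
    axialMatrix e a b * axialMatrix e a⁻¹ b⁻¹ = 1 := by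
  rw [axialMatrix_mul_axialMatrix he, mul_inv_cancel₀ ha, mul_inv_cancel₀ hb,
    axialMatrix_one_one]

theorem axialMatrix_inv (he : e ⬝ᵥ e = 1) (ha : a ≠ 0) (hb : b ≠ 0) :
    (axialMatrix e a b)⁻¹ = axialMatrix e a⁻¹ b⁻¹ :=
  inv_eq_right_inv (axialMatrix_mul_axialMatrix_inv he ha hb)

theorem posDef_axialMatrix (he : e ⬝ᵥ e = 1) (ha : 0 < a) (hb : 0 < b) :
    (axialMatrix e a b).PosDef := by
  have hunit : IsUnit (axialMatrix e √a √b) := IsUnit.of_mul_eq_one _ <|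
    axialMatrix_mul_axialMatrix_inv he (Real.sqrt_pos.2 ha).ne' (Real.sqrt_pos.2 hb).ne'
  have hsquare := PosDef.conjTranspose_mul_self _ (mulVec_injective_of_isUnit hunit)
  rwa [isHermitian_axialMatrix.eq, axialMatrix_mul_axialMatrix he, Real.mul_self_sqrt ha.le,
    Real.mul_self_sqrt hb.le] at hsquare

theorem det_axialMatrix (he : e ⬝ᵥ e = 1) (hb : b ≠ 0) :
    (axialMatrix e a b).det = a * b ^ (Fintype.card ι - 1) := by
  have hcard : 0 < Fintype.card ι := by
    rw [Fintype.card_pos_iff, ← not_isEmpty_iff]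
    intro
    simp at he
  have hfactor : axialMatrix e a b =
      b • (1 + replicateCol Unit (((a - b) / b) • e) * replicateRow Unit e) := by
    rw [← vecMulVec_eq, smul_vecMulVec, smul_add, smul_smul, mul_div_cancel₀ _ hb, axialMatrix]
  rw [hfactor, det_smul, det_one_add_replicateCol_mul_replicateRow, dotProduct_smul, he,
    ← Nat.sub_add_cancel hcard, pow_succ, Nat.add_sub_cancel, smul_eq_mul]
  field_simp
  ring

theorem axialMatrix_mulVec (he : e ⬝ᵥ e = 1) (hw : e ⬝ᵥ w = 0) :
    axialMatrix e a b *ᵥ (t • e + w) = (a * t) • e + b • w := by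
  simp only [axialMatrix, add_mulVec, smul_mulVec, one_mulVec, vecMulVec_mulVec, op_smul_eq_smul,
    dotProduct_add, dotProduct_smul, he, hw, smul_eq_mul]
  module

end AxialMatrix

section AxialCoordinates

variable {E V : Type*} [NormedAddCommGroup E] [InnerProductSpace ℝ E]
  [NormedAddCommGroup V] [InnerProductSpace ℝ V] {e : E}

theorem norm_smul_add_smul_sq_of_inner_eq_zero {w : E} (he : ‖e‖ = 1)
    (hw : inner ℝ e w = 0) (a b t : ℝ) :
    ‖(a * t) • e + b • w‖ ^ 2 = a ^ 2 * t ^ 2 + b ^ 2 * ‖w‖ ^ 2 := by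
  rw [norm_add_sq_real, inner_smul_left, inner_smul_right, hw, norm_smul, norm_smul, he]
  simp only [Real.norm_eq_abs, mul_pow, sq_abs]
  ring

variable [FiniteDimensional ℝ E] [FiniteDimensional ℝ V]

theorem exists_linearIsometryEquiv_map_eq {F : Type*} [NormedAddCommGroup F]
    [InnerProductSpace ℝ F] [FiniteDimensional ℝ F] (hdim : finrank ℝ F = finrank ℝ E) {v : F}
    (hv : ‖v‖ = ‖e‖) : ∃ Φ : F ≃ₗᵢ[ℝ] E, Φ v = e := by
  let Ψ : F ≃ₗᵢ[ℝ] E := (stdOrthonormalBasis ℝ F).equiv (stdOrthonormalBasis ℝ E) (finCongr hdim)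
  refine ⟨Ψ.trans (ℝ ∙ (Ψ v - e))ᗮ.reflection, ?_⟩
  rw [LinearIsometryEquiv.trans_apply, Submodule.reflection_sub (by rw [Ψ.norm_map, hv])]

variable [MeasurableSpace E] [BorelSpace E] [MeasurableSpace V] [BorelSpace V]

theorem exists_measurePreserving_axis_add_linearIsometry (he : ‖e‖ = 1)
    (hdim : finrank ℝ V + 1 = finrank ℝ E) :
    ∃ J : V →ₗᵢ[ℝ] E, (∀ z, inner ℝ e (J z) = 0) ∧
      MeasurePreserving (fun p : ℝ × V => p.1 • e + J p.2) (volume.prod volume) volume ∧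
      MeasurableEmbedding fun p : ℝ × V => p.1 • e + J p.2 := by
  obtain ⟨Φ, hΦ⟩ := exists_linearIsometryEquiv_map_eq (E := E) (e := e)
    (F := WithLp 2 (ℝ × V)) (v := WithLp.toLp 2 (1, 0))
    (by rw [(WithLp.linearEquiv 2 ℝ (ℝ × V)).finrank_eq, finrank_prod, finrank_self, ← hdim,
      add_comm]) (by simp [he])
  let J : V →ₗᵢ[ℝ] E :=
    { toLinearMap := Φ.toLinearMap ∘ₗ (WithLp.linearEquiv 2 ℝ (ℝ × V)).symm.toLinearMap ∘ₗ
        LinearMap.inr ℝ ℝ V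
      norm_map' := fun z => by simp }
  have hJ (z : V) : J z = Φ (WithLp.toLp 2 (0, z)) := rfl
  have hcoord : (fun p : ℝ × V => p.1 • e + J p.2) = Φ ∘ WithLp.toLp 2 := by
    ext1 p
    simp only [← hΦ, hJ, ← map_smul, ← map_add, ← WithLp.toLp_smul, ← WithLp.toLp_add,
      Prod.smul_mk, Prod.mk_add_mk, smul_zero, add_zero, zero_add, smul_eq_mul, mul_one,
      Function.comp_apply]
  refine ⟨J, fun z => ?_, ?_, ?_⟩
  · rw [← hΦ, hJ, Φ.inner_map_map, WithLp.prod_inner_apply, inner_zero_right, inner_zero_left,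
      add_zero]
  · rw [hcoord]
    exact Φ.measurePreserving.comp (WithLp.volume_preserving_toLp ℝ V)
  · rw [hcoord]
    exact Φ.toMeasurableEquiv.measurableEmbedding.comp
      (MeasurableEquiv.toLp 2 (ℝ × V)).measurableEmbedding

end AxialCoordinates

section SecondIncrement

variable {n : ℕ} {u : EuclideanSpace ℝ (Fin n) → ℝ} {L C : ℝ}

theorem measurable_delta2_smul (hLip : ∀ a b, |u a - u b| ≤ L * ‖a - b‖)
    (x e : EuclideanSpace ℝ (Fin n)) : Measurable fun t : ℝ => delta2 u x (t • e) := by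
  have hu : Continuous u := (LipschitzWith.of_dist_le' (K := L) fun a b => by
    simpa only [dist_eq_norm, Real.norm_eq_abs] using hLip a b).continuous
  unfold delta2
  fun_prop

theorem delta2_le_growthBound (hLip : ∀ a b, |u a - u b| ≤ L * ‖a - b‖)
    (hSC : ∀ a b, delta2 u a b ≤ C * ‖b‖ ^ 2) (x y : EuclideanSpace ℝ (Fin n)) :
    delta2 u x y ≤ growthBound L C ‖y‖ := by
  refine le_min (hSC x y) ?_
  have hplus := (le_abs_self _).trans (hLip (x + y) x)
  have hminus := (le_abs_self _).trans (hLip (x - y) x)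
  rw [add_sub_cancel_left] at hplus
  rw [sub_sub_cancel_left, norm_neg] at hminus
  unfold delta2
  linarith

theorem delta2_add_add_delta2_sub (x v w : EuclideanSpace ℝ (Fin n)) :
    delta2 u x (v + w) + delta2 u x (v - w) =
      2 * delta2 u x v + delta2 u (x + v) w + delta2 u (x - v) w := by
  simp only [delta2, add_assoc, add_sub_assoc, sub_add, sub_sub, sub_sub_eq_add_sub]
  ring

theorem delta2_add_add_delta2_sub_le (hLip : ∀ a b, |u a - u b| ≤ L * ‖a - b‖)
    (hSC : ∀ a b, delta2 u a b ≤ C * ‖b‖ ^ 2) (x v w : EuclideanSpace ℝ (Fin n)) :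
    delta2 u x (v + w) + delta2 u x (v - w) ≤ 2 * (delta2 u x v + growthBound L C ‖w‖) := by
  rw [delta2_add_add_delta2_sub]
  linarith [delta2_le_growthBound hLip hSC (x + v) w, delta2_le_growthBound hLip hSC (x - v) w]

end SecondIncrement

section AxialOperator

open Matrix

variable {n : ℕ} {V : Type*} [NormedAddCommGroup V] [InnerProductSpace ℝ V]
  {u : EuclideanSpace ℝ (Fin n) → ℝ} {x e : EuclideanSpace ℝ (Fin n)} {s L C a b : ℝ}

theorem dotProduct_self_of_norm_eq_one (he : ‖e‖ = 1) : e ⬝ᵥ e = 1 := by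
  rw [← one_pow 2, ← he, ← real_inner_self_eq_norm_sq]
  rfl

theorem norm_axialMatrix_inv_mulVec_sq {w : EuclideanSpace ℝ (Fin n)} (he : ‖e‖ = 1)
    (hw : inner ℝ e w = 0) (ha : a ≠ 0) (hb : b ≠ 0) (t : ℝ) :
    ‖(EuclideanSpace.equiv (Fin n) ℝ).symm
        ((axialMatrix e a b)⁻¹ *ᵥ EuclideanSpace.equiv (Fin n) ℝ (t • e + w))‖ ^ 2 =
      a⁻¹ ^ 2 * t ^ 2 + b⁻¹ ^ 2 * ‖w‖ ^ 2 := by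
  have hunit := dotProduct_self_of_norm_eq_one he
  have hperp : e ⬝ᵥ w = 0 := by
    rw [← hw, real_inner_comm]
    rfl
  have himage : (EuclideanSpace.equiv (Fin n) ℝ).symm
      ((axialMatrix e a b)⁻¹ *ᵥ EuclideanSpace.equiv (Fin n) ℝ (t • e + w)) =
        (a⁻¹ * t) • e + b⁻¹ • w := by
    rw [axialMatrix_inv hunit ha hb, ContinuousLinearEquiv.symm_apply_eq]
    exact axialMatrix_mulVec hunit hperp
  rw [himage, norm_smul_add_smul_sq_of_inner_eq_zero he hw]

theorem kernelA_axialMatrix {J : V →ₗᵢ[ℝ] EuclideanSpace ℝ (Fin n)}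
    (hJ : ∀ z, inner ℝ e (J z) = 0) (he : ‖e‖ = 1) (hdim : finrank ℝ V + 1 = n) (ha : a ≠ 0)
    (hb : b ≠ 0) (t : ℝ) (z : V) :
    kernelA s (axialMatrix e a b) u x (t • e + J z) =
      delta2 u x (t • e + J z) * axialKernel s a⁻¹ b⁻¹ t z := by
  have hexp : -((finrank ℝ V + 1 : ℝ) / 2 + s) = -(n + 2 * s) / 2 := by
    rw [← hdim, Nat.cast_add_one]
    ring
  rw [kernelA, axialKernel, ← J.norm_map z, ← norm_axialMatrix_inv_mulVec_sq he (hJ z) ha hb,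
    hexp, ← Real.rpow_natCast, ← Real.rpow_mul (norm_nonneg _), Nat.cast_ofNat,
    mul_div_cancel₀ _ two_ne_zero, Real.rpow_neg (norm_nonneg _), div_eq_mul_inv]

theorem delta2_add_reflection_le (hLip : ∀ a b, |u a - u b| ≤ L * ‖a - b‖)
    (hSC : ∀ a b, delta2 u a b ≤ C * ‖b‖ ^ 2) (J : V →ₗᵢ[ℝ] EuclideanSpace ℝ (Fin n)) (t : ℝ)
    (z : V) :
    delta2 u x (t • e + J z) + delta2 u x (t • e + J (-z)) ≤
      2 * (delta2 u x (t • e) + growthBound L C ‖z‖) := by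
  rw [map_neg, ← sub_eq_add_neg, ← J.norm_map z]
  exact delta2_add_add_delta2_sub_le hLip hSC x (t • e) (J z)

variable [FiniteDimensional ℝ V] [MeasurableSpace V] [BorelSpace V]

theorem exists_LA_axialMatrix_eq (hdim : finrank ℝ V + 1 = n) (ha : a ≠ 0) (hb : b ≠ 0)
    (he : ‖e‖ = 1) (hint : Integrable (kernelA s (axialMatrix e a b) u x)) :
    ∃ J : V →ₗᵢ[ℝ] EuclideanSpace ℝ (Fin n),
      Integrable (fun p : ℝ × V =>
        delta2 u x (p.1 • e + J p.2) * axialKernel s a⁻¹ b⁻¹ p.1 p.2) (volume.prod volume) ∧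
      LA s (axialMatrix e a b) u x = 1 / 2 * ∫ p : ℝ × V,
        delta2 u x (p.1 • e + J p.2) * axialKernel s a⁻¹ b⁻¹ p.1 p.2 ∂(volume.prod volume) := by
  obtain ⟨J, hJ, hpres, hemb⟩ := exists_measurePreserving_axis_add_linearIsometry (V := V) he
    (by rw [hdim, finrank_euclideanSpace_fin])
  have hkernel (p : ℝ × V) :=
    kernelA_axialMatrix (s := s) (u := u) (x := x) hJ he hdim ha hb p.1 p.2
  refine ⟨J, ?_, ?_⟩
  · simpa only [← hkernel, Function.comp_def] using (hpres.integrable_comp_emb hemb).2 hint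
  · simp only [← hkernel, LA, hpres.integral_comp hemb]

variable [Nontrivial V]

theorem integrable_delta2_axis (hdim : finrank ℝ V + 1 = n) (hs : 1 / 2 < s) (hs1 : s < 1)
    (hL : 0 < L) (hC : 0 < C) (ha : 0 < a) (hb : 0 < b)
    (hLip : ∀ a b, |u a - u b| ≤ L * ‖a - b‖) (hSC : ∀ a b, delta2 u a b ≤ C * ‖b‖ ^ 2)
    (he : ‖e‖ = 1) (hint : Integrable (kernelA s (axialMatrix e a b) u x)) :
    Integrable fun t : ℝ => delta2 u x (t • e) * |t| ^ (-(1 + 2 * s)) := by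
  obtain ⟨J, hJint, -⟩ := exists_LA_axialMatrix_eq (V := V) hdim ha.ne' hb.ne' he hint
  have hle (t : ℝ) : delta2 u x (t • e) ≤ growthBound L C |t| := by
    simpa only [norm_smul, he, mul_one, Real.norm_eq_abs] using
      delta2_le_growthBound hLip hSC x (t • e)
  exact integrable_of_integrable_mul_axialKernel hs hs1 hL hC (inv_pos.2 ha) (inv_pos.2 hb)
    (measurable_delta2_smul hLip x e) hle (delta2_add_reflection_le hLip hSC J) hJint

theorem LA_axialMatrix_le (hdim : finrank ℝ V + 1 = n) (hs : 1 / 2 < s) (hs1 : s < 1)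
    (hL : 0 < L) (hC : 0 < C) (ha : 0 < a) (hb : 0 < b)
    (hLip : ∀ a b, |u a - u b| ≤ L * ‖a - b‖) (hSC : ∀ a b, delta2 u a b ≤ C * ‖b‖ ^ 2)
    (he : ‖e‖ = 1) (hint : Integrable (kernelA s (axialMatrix e a b) u x)) :
    (1 - s) * LA s (axialMatrix e a b) u x ≤ a * b ^ finrank ℝ V *
      (C2 n s * a ^ (2 * s) *
          ((1 - s) * (1 / 2 * ∫ t : ℝ, delta2 u x (t • e) * |t| ^ (-(1 + 2 * s)))) +
        C1 n s L C * b ^ (2 * s)) := by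
  obtain ⟨J, hJint, hLA⟩ := exists_LA_axialMatrix_eq (V := V) hdim ha.ne' hb.ne' he hint
  have hle := integral_mul_axialKernel_le hs hs1 hL hC (inv_pos.2 ha) (inv_pos.2 hb)
    (measurable_delta2_smul hLip x e)
    (integrable_delta2_axis (V := V) hdim hs hs1 hL hC ha hb hLip hSC he hint)
    (delta2_add_reflection_le hLip hSC J) hJint
  rwa [← hLA, hdim, inv_pow, ← mul_inv, inv_inv, Real.rpow_neg (by positivity),
    Real.rpow_neg (by positivity), Real.inv_rpow ha.le, Real.inv_rpow hb.le, inv_inv,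
    inv_inv] at hle

end AxialOperator

section Parameters

variable {s : ℝ}

theorem exists_axial_scales (m : ℕ) (hs : s ≠ 0) {κ : ℝ} (hκ : 0 < κ) :
    ∃ a b : ℝ, 0 < a ∧ 0 < b ∧ a * b ^ m = 1 ∧ a ^ (2 * s) = (κ ^ m)⁻¹ ∧ b ^ (2 * s) = κ := by
  have hb : (κ ^ (2 * s)⁻¹) ^ (2 * s) = κ := Real.rpow_inv_rpow hκ.le (by positivity)
  refine ⟨((κ ^ (2 * s)⁻¹) ^ m)⁻¹, κ ^ (2 * s)⁻¹, by positivity, by positivity,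
    inv_mul_cancel₀ (by positivity), ?_, hb⟩
  rw [Real.inv_rpow (by positivity), ← Real.rpow_pow_comm (by positivity), hb]

theorem mu0_succ {m : ℕ} {L C η₀ : ℝ} (hC1 : 0 < C1 (m + 1) s L C) :
    mu0 (m + 1) s L C η₀ =
      (C2 (m + 1) s)⁻¹ * (η₀ / (2 * C1 (m + 1) s L C)) ^ m * (η₀ / 2) := by
  rw [mu0, Real.rpow_natCast, Nat.cast_add_one, sub_add_cancel_right, Real.rpow_neg hC1.le,
    Real.rpow_natCast, pow_succ, div_pow, div_pow, mul_pow]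
  field_simp

end Parameters

theorem stmt5_general (n : ℕ) (hn : 2 ≤ n) (s L C η₀ : ℝ)
    (hs : 1 / 2 < s) (hs1 : s < 1) (hL : 0 < L) (hC : 0 < C) (hη : 0 < η₀)
    (u : EuclideanSpace ℝ (Fin n) → ℝ)
    (hLip : ∀ a b : EuclideanSpace ℝ (Fin n), |u a - u b| ≤ L * ‖a - b‖)
    (hSC : ∀ a b : EuclideanSpace ℝ (Fin n), delta2 u a b ≤ C * ‖b‖ ^ 2)
    (x e : EuclideanSpace ℝ (Fin n)) (he : ‖e‖ = 1)
    (hEll : ∀ a b : ℝ, 0 < a → 0 < b → a * b ^ (n - 1) = 1 →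
      Integrable (fun y => kernelA s (axialMatrix e a b) u x y) ∧
        η₀ ≤ (1 - s) * LA s (axialMatrix e a b) u x) :
    Integrable (fun t : ℝ => delta2 u x (t • e) / |t| ^ (1 + 2 * s)) ∧
      mu0 n s L C η₀ ≤
        (1 - s) * (1 / 2 * ∫ t : ℝ, delta2 u x (t • e) / |t| ^ (1 + 2 * s)) := by
  simp only [div_eq_mul_inv _ (|_| ^ _), ← Real.rpow_neg (abs_nonneg _)]
  obtain ⟨m, rfl⟩ : ∃ m, n = m + 1 := ⟨n - 1, by omega⟩
  have hm : 0 < m := by omega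
  have : Nonempty (Fin m) := ⟨⟨0, hm⟩⟩
  have hdim : finrank ℝ (EuclideanSpace ℝ (Fin m)) + 1 = m + 1 := by
    rw [finrank_euclideanSpace_fin]
  have hC1 : 0 < C1 (m + 1) s L C := C1_succ_pos hm hs hL hC
  have hC2 : 0 < C2 (m + 1) s := C2_succ_pos hm (by linarith)
  have hκ : 0 < η₀ / (2 * C1 (m + 1) s L C) := by positivity
  obtain ⟨a, b, ha, hb, hab, ha_rpow, hb_rpow⟩ :=
    exists_axial_scales m (s := s) (by linarith) hκ
  obtain ⟨hint, hell⟩ := hEll a b ha hb hab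
  have hLA := LA_axialMatrix_le hdim hs hs1 hL hC ha hb hLip hSC he hint
  have htransversal : C1 (m + 1) s L C * (η₀ / (2 * C1 (m + 1) s L C)) = η₀ / 2 := by field_simp
  refine ⟨integrable_delta2_axis hdim hs hs1 hL hC ha hb hLip hSC he hint, ?_⟩
  rw [finrank_euclideanSpace_fin, hab, one_mul, ha_rpow, hb_rpow, htransversal] at hLA
  rw [mu0_succ hC1, ← div_eq_inv_mul, div_mul_eq_mul_div, div_le_iff₀' hC2,
    ← le_inv_mul_iff₀ (by positivity)]
  linarith

theorem stmt5 (n : ℕ) (hn : 2 ≤ n) (s L C η₀ : ℝ)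
    (hs : 1 / 2 < s) (hs1 : s < 1) (hL : 0 < L) (hC : 0 < C) (hη : 0 < η₀)
    (u : EuclideanSpace ℝ (Fin n) → ℝ)
    (hLip : ∀ a b : EuclideanSpace ℝ (Fin n), |u a - u b| ≤ L * ‖a - b‖)
    (hSC : ∀ a b : EuclideanSpace ℝ (Fin n), delta2 u a b ≤ C * ‖b‖ ^ 2)
    (x : EuclideanSpace ℝ (Fin n))
    (hEll : ∀ A : Matrix (Fin n) (Fin n) ℝ, A.PosDef → A.det = 1 →
      Integrable (fun y => kernelA s A u x y) ∧ η₀ ≤ (1 - s) * LA s A u x) :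
    Integrable (fun t : ℝ =>
      delta2 u x (t • EuclideanSpace.single (⟨0, by omega⟩ : Fin n) (1 : ℝ)) / |t| ^ (1 + 2 * s)) ∧
    mu0 n s L C η₀ ≤ (1 - s) * (1 / 2 * ∫ t : ℝ,
      delta2 u x (t • EuclideanSpace.single (⟨0, by omega⟩ : Fin n) (1 : ℝ)) / |t| ^ (1 + 2 * s)) := by
  have he : ‖EuclideanSpace.single (⟨0, by omega⟩ : Fin n) (1 : ℝ)‖ = 1 := by simp
  have hunit := dotProduct_self_of_norm_eq_one he
  exact stmt5_general n hn s L C η₀ hs hs1 hL hC hη u hLip hSC x _ he fun a b ha hb hab =>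
    hEll _ (posDef_axialMatrix hunit ha hb)
      (by rw [det_axialMatrix hunit hb.ne', Fintype.card_fin, hab])
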